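/- Let Ξ, Ω ⊆ ℍ be domains, θ ∈ [0,2π), and let T : Ξ → Ω be a C¹ bijection. Let A : Ξ → ℍ and B : Ω → ℍ be C¹ functions, nowhere zero, satisfying the chain rule ${}^θ𝒟_z[\,A·(f∘T)\,] = (B∘T)·(({}^θ𝒟 f)∘T)$ on Ξ for every f ∈ C¹(Ω,ℍ). Fix u, v ∈ ℍ and set δ_T(ζ) := B(ζ)^{−1}·v·A(T^{−1}(ζ)) for ζ ∈ Ω. Then for every f ∈ C¹(Ω,ℍ): ${}^θ𝒟 f + δ_T·f = 0$ on Ω if and only if the function $z ↦ e^{⟨v−u,z⟩_θ}A(z)\,f(T(z))$ satisfies ${}^θ𝒟 g + u·g = 0$ on Ξ. -/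

import Mathlib

open MeasureTheory

noncomputable section

/-- The real quaternions `ℍ`. -/
abbrev H4 : Type := Quaternion ℝ

instance : MeasurableSpace H4 := borel _
instance : BorelSpace H4 := ⟨rfl⟩

/-- The quaternion unit `i`. -/
def qI : H4 := ⟨0, 1, 0, 0⟩
/-- The quaternion unit `j`. -/
def qJ : H4 := ⟨0, 0, 1, 0⟩
/-- `e^{iθ} = cos θ + (sin θ) i` as a quaternion. -/
def eIθ (θ : ℝ) : H4 := ⟨Real.cos θ, Real.sin θ, 0, 0⟩
/-- The basis direction `i e^{iθ} j`. -/
def e2 (θ : ℝ) : H4 := qI * eIθ θ * qJ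
/-- The basis direction `e^{iθ} j`. -/
def e3 (θ : ℝ) : H4 := eIθ θ * qJ

/-- Third θ-coordinate of a quaternion `z = x₀ + x₁ i + x₂ (i e^{iθ} j) + x₃ (e^{iθ} j)`. -/
def x2θ (θ : ℝ) (z : H4) : ℝ := -z.imJ * Real.sin θ + z.imK * Real.cos θ
/-- Fourth θ-coordinate of a quaternion. -/
def x3θ (θ : ℝ) (z : H4) : ℝ := z.imJ * Real.cos θ + z.imK * Real.sin θ

/-- The θ-inner product `⟨u,z⟩_θ`: the dot product of θ-coordinates. -/
def innerθ (θ : ℝ) (u z : H4) : ℝ :=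
  u.re * z.re + u.imI * z.imI + x2θ θ u * x2θ θ z + x3θ θ u * x3θ θ z

/-- Left θ-Cauchy–Riemann operator
`{}^θ𝒟 f = ∂f/∂x₀ + i ∂f/∂x₁ + (i e^{iθ} j) ∂f/∂x₂ + (e^{iθ} j) ∂f/∂x₃`. -/
def Dl (θ : ℝ) (f : H4 → H4) (z : H4) : H4 :=
  fderiv ℝ f z 1 + qI * fderiv ℝ f z qI + e2 θ * fderiv ℝ f z (e2 θ) +
    e3 θ * fderiv ℝ f z (e3 θ)

/-- Left (θ,u)-Cauchy–Riemann operator `{}^θ_u𝒟 f = {}^θ𝒟 f + u f`. -/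
def Dlu (θ : ℝ) (u : H4) (f : H4 → H4) (z : H4) : H4 := Dl θ f z + u * f z

/-- Right θ-Cauchy–Riemann operator. -/
def Dr (θ : ℝ) (f : H4 → H4) (z : H4) : H4 :=
  fderiv ℝ f z 1 + fderiv ℝ f z qI * qI + fderiv ℝ f z (e2 θ) * e2 θ +
    fderiv ℝ f z (e3 θ) * e3 θ

/-- Right (θ,u)-Cauchy–Riemann operator `{}^θ𝒟_{r,u} f = {}^θ𝒟_r f + f u`. -/
def Dru (θ : ℝ) (u : H4) (f : H4 → H4) (z : H4) : H4 := Dr θ f z + f z * u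

/-- Embedding of ℂ into the quaternions, `ℂ ≅ ℝ + ℝi ⊂ ℍ`. -/
def toH (a : ℂ) : H4 := ⟨a.re, a.im, 0, 0⟩

/-- First complex θ-component of a quaternion: `z₁ = x₀ + x₁ i`. -/
def c1 (z : H4) : ℂ := ⟨z.re, z.imI⟩
/-- Second complex θ-component of a quaternion: `z₂ = x₂ + x₃ i`. -/
def c2 (θ : ℝ) (z : H4) : ℂ := ⟨x2θ θ z, x3θ θ z⟩

/-- Wirtinger operator `∂/∂z̄₁ = ∂/∂x₀ + i ∂/∂x₁` on ℂ-valued functions. -/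
def db1 (f : H4 → ℂ) (z : H4) : ℂ := fderiv ℝ f z 1 + Complex.I * fderiv ℝ f z qI
/-- Wirtinger operator `∂/∂z̄₂ = ∂/∂x₂ + i ∂/∂x₃` on ℂ-valued functions. -/
def db2 (θ : ℝ) (f : H4 → ℂ) (z : H4) : ℂ :=
  fderiv ℝ f z (e2 θ) + Complex.I * fderiv ℝ f z (e3 θ)
/-- Wirtinger operator `∂/∂z₂ = ∂/∂x₂ − i ∂/∂x₃` on ℂ-valued functions. -/
def dz2 (θ : ℝ) (f : H4 → ℂ) (z : H4) : ℂ :=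
  fderiv ℝ f z (e2 θ) - Complex.I * fderiv ℝ f z (e3 θ)

/-- `e^{iθ}` as a complex number. -/
def cexpI (θ : ℝ) : ℂ := ⟨Real.cos θ, Real.sin θ⟩

/-!
Since `{}^θ𝒟 ⟨w,z⟩_θ = w`, the Leibniz rule shows that multiplication by `e^{⟨v - u,z⟩_θ}`
intertwines `{}^θ𝒟 + v` with `{}^θ𝒟 + u`. This reduces the claim to `{}^θ𝒟 + v` acting on
`A · (f ∘ T)`, where the chain rule, after factoring out `B ∘ T`, gives
`(B ∘ T) · (({}^θ𝒟 f + δ_T f) ∘ T)`. The factors `e^{⟨v - u,z⟩_θ}` and `B ∘ T` never vanish.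
-/

open scoped Quaternion

theorem e2_eq (θ : ℝ) : e2 θ = ⟨0, 0, -Real.sin θ, Real.cos θ⟩ := by
  ext <;> simp only [e2, Quaternion.re_mul, Quaternion.imI_mul, Quaternion.imJ_mul,
    Quaternion.imK_mul] <;> simp [qI, eIθ, qJ]

theorem e3_eq (θ : ℝ) : e3 θ = ⟨0, 0, Real.cos θ, Real.sin θ⟩ := by
  ext <;> simp only [e3, Quaternion.re_mul, Quaternion.imI_mul, Quaternion.imJ_mul,
    Quaternion.imK_mul] <;> simp [eIθ, qJ]

theorem eq_sum_θ_coordinates (θ : ℝ) (z : H4) :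
    z = (z.re : H4) + z.imI • qI + x2θ θ z • e2 θ + x3θ θ z • e3 θ := by
  have hcs := Real.sin_sq_add_cos_sq θ
  ext <;> simp only [Quaternion.re_add, Quaternion.imI_add, Quaternion.imJ_add,
    Quaternion.imK_add, Quaternion.re_smul, Quaternion.imI_smul, Quaternion.imJ_smul,
    Quaternion.imK_smul, Quaternion.re_coe, Quaternion.imI_coe, Quaternion.imJ_coe,
    Quaternion.imK_coe] <;> simp only [smul_eq_mul, qI, e2_eq, e3_eq, x2θ, x3θ]
  · ring
  · ring
  · linear_combination -z.imJ * hcs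
  · linear_combination -z.imK * hcs

theorem innerθ_one (θ : ℝ) (w : H4) : innerθ θ w 1 = w.re := by
  simp [innerθ, x2θ, x3θ]

theorem innerθ_qI (θ : ℝ) (w : H4) : innerθ θ w qI = w.imI := by
  simp [innerθ, qI, x2θ, x3θ]

theorem innerθ_e2 (θ : ℝ) (w : H4) : innerθ θ w (e2 θ) = x2θ θ w := by
  simp only [innerθ, e2_eq, x2θ, x3θ]
  linear_combination (-w.imJ * Real.sin θ + w.imK * Real.cos θ) * Real.sin_sq_add_cos_sq θ

theorem innerθ_e3 (θ : ℝ) (w : H4) : innerθ θ w (e3 θ) = x3θ θ w := by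
  simp only [innerθ, e3_eq, x2θ, x3θ]
  linear_combination (w.imJ * Real.cos θ + w.imK * Real.sin θ) * Real.sin_sq_add_cos_sq θ

theorem innerθ_eq_inner (θ : ℝ) (w z : H4) : innerθ θ w z = inner ℝ w z := by
  simp only [innerθ, x2θ, x3θ, Quaternion.inner_def, Quaternion.re_mul, Quaternion.re_star,
    Quaternion.imI_star, Quaternion.imJ_star, Quaternion.imK_star]
  linear_combination (w.imJ * z.imJ + w.imK * z.imK) * Real.sin_sq_add_cos_sq θ

theorem hasFDerivAt_innerθ (θ : ℝ) (w z : H4) : HasFDerivAt (innerθ θ w) (innerSL ℝ w) z := by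
  have h : innerθ θ w = innerSL ℝ w := funext (innerθ_eq_inner θ w)
  exact h ▸ (innerSL ℝ w).hasFDerivAt

theorem fderiv_innerθ_apply (θ : ℝ) (w z d : H4) :
    fderiv ℝ (innerθ θ w) z d = innerθ θ w d := by
  rw [(hasFDerivAt_innerθ θ w z).fderiv, innerSL_apply_apply, innerθ_eq_inner]

theorem fderiv_coe_quaternion_apply {E : Type*} [NormedAddCommGroup E] [NormedSpace ℝ E]
    {φ : E → ℝ} {z : E} (hφ : DifferentiableAt ℝ φ z) (d : E) :
    fderiv ℝ (fun y => (φ y : H4)) z d = (fderiv ℝ φ z d : H4) :=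
  congrArg (· d) ((algebraMapCLM ℝ H4).hasFDerivAt.comp z hφ.hasFDerivAt).fderiv

theorem Dl_smul (θ : ℝ) {φ : H4 → ℝ} {h : H4 → H4} {z : H4}
    (hφ : DifferentiableAt ℝ φ z) (hh : DifferentiableAt ℝ h z) :
    Dl θ (fun y => φ y • h y) z = φ z • Dl θ h z + Dl θ (fun y => (φ y : H4)) z * h z := by
  simp only [Dl, fderiv_fun_smul hφ hh, fderiv_coe_quaternion_apply hφ,
    add_apply, smul_apply, ContinuousLinearMap.smulRight_apply, Quaternion.mul_coe_eq_smul,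
    Quaternion.coe_mul_eq_smul, mul_add, add_mul, smul_add, mul_smul_comm, smul_mul_assoc]
  abel

theorem Dl_coe_exp (θ : ℝ) {φ : H4 → ℝ} {z : H4} (hφ : DifferentiableAt ℝ φ z) :
    Dl θ (fun y => (Real.exp (φ y) : H4)) z
      = Real.exp (φ z) • Dl θ (fun y => (φ y : H4)) z := by
  simp only [Dl, fderiv_coe_quaternion_apply hφ.exp, fderiv_coe_quaternion_apply hφ,
    fderiv_exp hφ, smul_apply, Quaternion.coe_smul, mul_smul_comm, smul_add]

theorem Dl_coe_innerθ (θ : ℝ) (w z : H4) : Dl θ (fun y => (innerθ θ w y : H4)) z = w := by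
  simp only [Dl, fderiv_coe_quaternion_apply (hasFDerivAt_innerθ θ w z).differentiableAt,
    fderiv_innerθ_apply, innerθ_one, innerθ_qI, innerθ_e2, innerθ_e3, Quaternion.mul_coe_eq_smul]
  exact (eq_sum_θ_coordinates θ w).symm

theorem Dlu_exp_innerθ_smul (θ : ℝ) (u v : H4) {h : H4 → H4} {z : H4}
    (hh : DifferentiableAt ℝ h z) :
    Dlu θ u (fun y => Real.exp (innerθ θ (v - u) y) • h y) z
      = Real.exp (innerθ θ (v - u) z) • Dlu θ v h z := by
  have hφ := (hasFDerivAt_innerθ θ (v - u) z).differentiableAt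
  rw [Dlu, Dl_smul θ hφ.exp hh, Dl_coe_exp θ hφ, Dl_coe_innerθ, mul_smul_comm, smul_mul_assoc,
    ← smul_add, ← smul_add, add_assoc, ← add_mul, sub_add_cancel, Dlu]

theorem Dlu_mul_comp_of_chain_rule {θ : ℝ} {T A f : H4 → H4} {z b : H4} (hb : b ≠ 0)
    (hchain : Dl θ (fun w => A w * f (T w)) z = b * Dl θ f (T z)) (v : H4) :
    Dlu θ v (fun w => A w * f (T w)) z = b * (Dl θ f (T z) + (b⁻¹ * v * A z) * f (T z)) := by
  rw [Dlu, hchain, mul_add]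
  simp only [mul_assoc, mul_inv_cancel_left₀ hb]

theorem statement5_general {Ξ Ω : Set H4} (hΞo : IsOpen Ξ) {θ : ℝ} {T S A B f : H4 → H4}
    (hT : DifferentiableOn ℝ T Ξ) (hTΩ : T '' Ξ = Ω)
    (hS : Set.LeftInvOn S T Ξ) (hA : DifferentiableOn ℝ A Ξ) (hB0 : ∀ ζ ∈ Ω, B ζ ≠ 0)
    (hf : DifferentiableOn ℝ f Ω)
    (hchain : ∀ z ∈ Ξ, Dl θ (fun w => A w * f (T w)) z = B (T z) * Dl θ f (T z)) (u v : H4) :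
    (∀ ζ ∈ Ω, Dl θ f ζ + ((B ζ)⁻¹ * v * A (S ζ)) * f ζ = 0) ↔
    (∀ z ∈ Ξ,
      Dlu θ u (fun w => Real.exp (innerθ θ (v - u) w) • (A w * f (T w))) z = 0) := by
  subst hTΩ
  rw [Set.forall_mem_image]
  refine forall₂_congr fun z hz => ?_
  have hTz : T z ∈ T '' Ξ := Set.mem_image_of_mem T hz
  have hAfT : DifferentiableAt ℝ (fun w => A w * f (T w)) z :=
    (hA.mul (hf.comp hT (Set.mapsTo_image T Ξ))).differentiableAt (hΞo.mem_nhds hz)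
  rw [Dlu_exp_innerθ_smul θ u v hAfT, Dlu_mul_comp_of_chain_rule (hB0 _ hTz) (hchain z hz) v,
    hS hz, smul_eq_zero_iff_right (Real.exp_ne_zero _), mul_eq_zero_iff_left (hB0 _ hTz)]

/-- `{}^θ𝒟 f + δ_T f = 0` on Ω iff `z ↦ e^{⟨v−u,z⟩_θ} A(z) f(T z)` is a null
solution of `{}^θ𝒟 + u` on Ξ, with `δ_T(ζ) = B(ζ)⁻¹ v A(T⁻¹ ζ)`. -/
theorem statement5 (Ξ Ω : Set H4) (hΞo : IsOpen Ξ) (hΞc : IsConnected Ξ)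
    (hΩo : IsOpen Ω) (hΩc : IsConnected Ω) (θ : ℝ) (hθ : θ ∈ Set.Ico 0 (2 * Real.pi))
    (T : H4 → H4) (hT : ContDiffOn ℝ 1 T Ξ) (hTbij : Set.BijOn T Ξ Ω)
    (S : H4 → H4) (hS : ∀ z ∈ Ξ, S (T z) = z) (hS' : ∀ ζ ∈ Ω, T (S ζ) = ζ)
    (A B : H4 → H4) (hA : ContDiffOn ℝ 1 A Ξ) (hB : ContDiffOn ℝ 1 B Ω)
    (hA0 : ∀ z ∈ Ξ, A z ≠ 0) (hB0 : ∀ ζ ∈ Ω, B ζ ≠ 0)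
    (hchain : ∀ f : H4 → H4, ContDiffOn ℝ 1 f Ω →
      ∀ z ∈ Ξ, Dl θ (fun w => A w * f (T w)) z = B (T z) * Dl θ f (T z))
    (u v : H4) (f : H4 → H4) (hf : ContDiffOn ℝ 1 f Ω) :
    (∀ ζ ∈ Ω, Dl θ f ζ + ((B ζ)⁻¹ * v * A (S ζ)) * f ζ = 0) ↔
    (∀ z ∈ Ξ,
      Dlu θ u (fun w => Real.exp (innerθ θ (v - u) w) • (A w * f (T w))) z = 0) := by
  exact statement5_general hΞo (hT.differentiableOn one_ne_zero) hTbij.image_eq hS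
    (hA.differentiableOn one_ne_zero) hB0 (hf.differentiableOn one_ne_zero) (hchain f hf) u v

end
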